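/- Let β ∈ (0,1). Then for any LD-sets C ⊆ X and D ⊆ X for Q, any initial probability measures ν and ν' on (X,𝒳), any function V : X → [1,∞), and any observation sequence y_{0:n} for which both filtering distributions are well defined, ‖φ_{ν,n}[y_{0:n}] − φ_{ν',n}[y_{0:n}]‖_TV ≤ ρ_C^{βn} + [ ∏_{i=0}^n Υ_X(y_i) · max_{I ⊆ {0,…,n}, |I| = a_n} ( ∏_{i∈I} Υ_{C^c}(y_i) · ∏_{i∉I} Υ_X(y_i) ) ] / [ (ε⁻_D)^{2(n−1)} · Φ_{ν,D}(y₀,y₁) · Φ_{ν',D}(y₀,y₁) · ∏_{i=2}^n Ψ_D(y_i)² ] · ν(V)·ν'(V), where a_n := ⌊n(1−β)/2⌋. -/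

import Mathlib

open MeasureTheory ProbabilityTheory Filter
open scoped ENNReal

/-- A set `C` is a local Doeblin (LD) set for the kernel `Q`, with minorizing/majorizing
measure `lam` and constants `em, ep`. -/
def IsLDSet {X : Type*} [MeasurableSpace X] (Q : Kernel X X) (C : Set X)
    (lam : Measure X) (em ep : ℝ) : Prop :=
  MeasurableSet C ∧ 0 < lam C ∧ 0 < em ∧ 0 < ep ∧
    ∀ x ∈ C, ∀ A : Set X, MeasurableSet A →
      ENNReal.ofReal em * lam (A ∩ C) ≤ Q x (A ∩ C) ∧
        Q x (A ∩ C) ≤ ENNReal.ofReal ep * lam (A ∩ C)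

/-- `QV(x) = ∫ V dQ(x,·)` for a drift function `V`. -/
noncomputable def kernelV {X : Type*} [MeasurableSpace X] (Q : Kernel X X) (V : X → ℝ)
    (x : X) : ℝ≥0∞ :=
  ∫⁻ x', ENNReal.ofReal (V x') ∂(Q x)

/-- `Υ_A(y) = sup_{x ∈ A} g(x,y) QV(x)/V(x)`. -/
noncomputable def Ups {X Y : Type*} [MeasurableSpace X] (Q : Kernel X X)
    (g : X → Y → ℝ) (V : X → ℝ) (A : Set X) (y : Y) : ℝ≥0∞ :=
  ⨆ x ∈ A, ENNReal.ofReal (g x y) * kernelV Q V x / ENNReal.ofReal (V x)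

/-- `Ψ_D(y) = λ_D(g(·,y) 1_D)`. -/
noncomputable def Psi {X Y : Type*} [MeasurableSpace X] (g : X → Y → ℝ)
    (lam : Measure X) (D : Set X) (y : Y) : ℝ≥0∞ :=
  ∫⁻ x in D, ENNReal.ofReal (g x y) ∂lam

/-- `Φ_{ν,D}(y₀,y₁) = ν[g(·,y₀) Q (g(·,y₁) 1_D)]`. -/
noncomputable def Phi {X Y : Type*} [MeasurableSpace X] (Q : Kernel X X)
    (g : X → Y → ℝ) (ν : Measure X) (D : Set X) (y0 y1 : Y) : ℝ≥0∞ :=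
  ∫⁻ x0, ENNReal.ofReal (g x0 y0) * ∫⁻ x1 in D, ENNReal.ofReal (g x1 y1) ∂(Q x0) ∂ν

/-- The unnormalized filtering measures: `filtSeq Q g ν y n` has total mass
`∫ ν(dx₀) g(x₀,y₀) ∏_{i=1}^n Q(x_{i−1},dx_i) g(x_i,y_i)`. -/
noncomputable def filtSeq {X Y : Type*} [MeasurableSpace X] (Q : Kernel X X)
    (g : X → Y → ℝ) (ν : Measure X) (y : ℕ → Y) : ℕ → Measure X
  | 0 => ν.withDensity (fun x => ENNReal.ofReal (g x (y 0)))
  | n + 1 => ((filtSeq Q g ν y n).bind (fun x => Q x)).withDensity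
      (fun x => ENNReal.ofReal (g x (y (n + 1))))

/-- The filtering distribution `φ_{ν,n}[y_{0:n}]` (normalized version of `filtSeq`). -/
noncomputable def filt {X Y : Type*} [MeasurableSpace X] (Q : Kernel X X)
    (g : X → Y → ℝ) (ν : Measure X) (y : ℕ → Y) (n : ℕ) : Measure X :=
  (filtSeq Q g ν y n Set.univ)⁻¹ • filtSeq Q g ν y n

/-- The total variation distance between two (finite) measures,
`sup_A |μ(A) − ν(A)|` over measurable sets `A`. -/
noncomputable def tvDist {X : Type*} [MeasurableSpace X] (μ ν : Measure X) : ℝ :=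
  ⨆ A : {S : Set X // MeasurableSet S}, |(μ A.1).toReal - (ν A.1).toReal|

/-!
Compare the two filters through two independent copies of the hidden chain, one started from `ν` and
the other from `ν'`: the difference of the filters is an integral of a function that changes sign
when the two copies are exchanged. As long as both copies move within `C`, the local Doeblin
condition bounds a share `(ε⁻ / ε⁺)²` of the transition law of the pair below by a product measure
that is symmetric under the exchange. This share contributes nothing to the difference, so such a
transition costs the factor `ρ_C = 1 - (ε⁻ / ε⁺)²`.

A visit of the pair outside `C × C` spoils at most two transitions. Hence, if `2 * a + t ≤ n + 1`,
either at least `t` of the `n` transitions stay in `C × C`, which gives `ρ_C ^ t`, or the pair is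
outside `C × C` at least `a` times. In the second case the drift function `V ⊗ V` controls the
weights: each time costs `Υ_X * Υ_X`, improved to `Υ_X * Υ_{Cᶜ}` outside `C × C`. The normalizing
constants are bounded below by forcing the chain to stay in `D` from time `1` on.
-/

section SupProd

variable {ι : Type*} [DecidableEq ι] {A B : ι → ℝ≥0∞} {s : Finset ι} {i : ι}

/-- The maximum of `∏_{i ∈ I} B i * ∏_{i ∈ s \ I} A i` over the subsets `I` of `s` with exactly `a`
elements; it is `0` when `s` has fewer than `a` elements. -/
noncomputable def supProd (A B : ι → ℝ≥0∞) (s : Finset ι) (a : ℕ) : ℝ≥0∞ :=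
  (s.powersetCard a).sup fun I => (∏ i ∈ I, B i) * ∏ i ∈ s \ I, A i

lemma supProd_zero (A B : ι → ℝ≥0∞) (s : Finset ι) : supProd A B s 0 = ∏ i ∈ s, A i := by
  simp [supProd]

lemma le_supProd {I : Finset ι} (hI : I ⊆ s) :
    (∏ i ∈ I, B i) * ∏ i ∈ s \ I, A i ≤ supProd A B s I.card :=
  Finset.le_sup (f := fun I => (∏ i ∈ I, B i) * ∏ i ∈ s \ I, A i)
    (Finset.mem_powersetCard.2 ⟨hI, rfl⟩)

lemma mul_supProd_le_supProd_insert (hi : i ∉ s) (a : ℕ) :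
    A i * supProd A B s a ≤ supProd A B (insert i s) a := by
  rw [supProd, Finset.mul_sup₀]
  refine Finset.sup_le fun I hI => ?_
  obtain ⟨hIs, rfl⟩ := Finset.mem_powersetCard.1 hI
  have hiI : i ∉ I := fun h => hi (hIs h)
  calc A i * ((∏ j ∈ I, B j) * ∏ j ∈ s \ I, A j)
      = (∏ j ∈ I, B j) * ∏ j ∈ insert i s \ I, A j := by
        rw [Finset.insert_sdiff_of_notMem _ hiI, Finset.prod_insert (by simp [hi])]
        ring
    _ ≤ supProd A B (insert i s) I.card := le_supProd (hIs.trans (Finset.subset_insert i s))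

lemma mul_supProd_le_supProd_insert_succ (hi : i ∉ s) (a : ℕ) :
    B i * supProd A B s a ≤ supProd A B (insert i s) (a + 1) := by
  rw [supProd, Finset.mul_sup₀]
  refine Finset.sup_le fun I hI => ?_
  obtain ⟨hIs, rfl⟩ := Finset.mem_powersetCard.1 hI
  have hiI : i ∉ I := fun h => hi (hIs h)
  calc B i * ((∏ j ∈ I, B j) * ∏ j ∈ s \ I, A j)
      = (∏ j ∈ insert i I, B j) * ∏ j ∈ insert i s \ insert i I, A j := by
        rw [Finset.insert_sdiff_insert, Finset.sdiff_insert_of_notMem hi, Finset.prod_insert hiI]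
        ring
    _ ≤ supProd A B (insert i s) (I.card + 1) := by
        rw [← Finset.card_insert_of_notMem hiI]
        exact le_supProd (Finset.insert_subset_insert i hIs)

lemma supProd_mul_left (c A B : ι → ℝ≥0∞) (s : Finset ι) (a : ℕ) :
    supProd (fun i => c i * A i) (fun i => c i * B i) s a = (∏ i ∈ s, c i) * supProd A B s a := by
  rw [supProd, supProd, Finset.mul_sup₀]
  refine Finset.sup_congr rfl fun I hI => ?_
  rw [← Finset.prod_sdiff (Finset.mem_powersetCard.1 hI).1, Finset.prod_mul_distrib,
    Finset.prod_mul_distrib]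
  ring

end SupProd

section Measures

variable {Z : Type*} [MeasurableSpace Z] {μ L : Measure Z} {S : Set Z}

-- The part `L` of `μ` is invariant under `T`, so it does not see the difference of `a` and `a ∘ T`.
lemma lintegral_le_lintegral_comp_add_lintegral_sub [IsFiniteMeasure L] {T : Z → Z}
    (hT : MeasurePreserving T L L) (hL : L ≤ μ) {a h : Z → ℝ≥0∞} (ha : Measurable a)
    (hh : Measurable h) (hle : ∀ z, a z ≤ a (T z) + h z) :
    ∫⁻ z, a z ∂μ ≤ ∫⁻ z, a (T z) ∂μ + ∫⁻ z, h z ∂(μ - L) := by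
  have split (f : Z → ℝ≥0∞) : ∫⁻ z, f z ∂μ = ∫⁻ z, f z ∂(μ - L) + ∫⁻ z, f z ∂L := by
    rw [← lintegral_add_measure, Measure.sub_add_cancel_of_le hL]
  calc ∫⁻ z, a z ∂μ = ∫⁻ z, a z ∂(μ - L) + ∫⁻ z, a (T z) ∂L := by
        rw [split, hT.lintegral_comp ha]
    _ ≤ (∫⁻ z, a (T z) ∂(μ - L) + ∫⁻ z, h z ∂(μ - L)) + ∫⁻ z, a (T z) ∂L := by
        rw [← lintegral_add_right _ hh]
        gcongr with z
        exact hle z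
    _ = ∫⁻ z, a (T z) ∂μ + ∫⁻ z, h z ∂(μ - L) := by
        rw [split fun z => a (T z)]
        ring

open Classical in
lemma sub_le_withDensity_ite (hS : MeasurableSet S) {r κ : ℝ≥0∞} (hrκ : r + κ = 1)
    (hL : κ • μ.restrict S ≤ L) :
    μ - L ≤ μ.withDensity fun z => if z ∈ S then r else 1 := by
  refine Measure.sub_le_of_le_add ?_
  have hκ : κ • μ.restrict S = μ.withDensity (S.indicator fun _ => κ) := by
    rw [withDensity_indicator hS, withDensity_const]
  have hone : (fun z => if z ∈ S then r else 1) + S.indicator (fun _ => κ) = 1 := by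
    funext z
    by_cases hz : z ∈ S <;> simp [hz, hrκ]
  calc μ = μ.withDensity (fun z => if z ∈ S then r else 1) + κ • μ.restrict S := by
        rw [hκ, ← withDensity_add_right _ (measurable_const.indicator hS), hone, withDensity_one]
    _ ≤ μ.withDensity (fun z => if z ∈ S then r else 1) + L := by gcongr

lemma ofReal_tvDist_le {μ ν : Measure Z} [IsProbabilityMeasure μ] [IsProbabilityMeasure ν]
    {b : ℝ≥0∞} (h : ∀ A, MeasurableSet A → μ A ≤ ν A + b) :
    ENNReal.ofReal (tvDist μ ν) ≤ b := by
  by_cases hb : b = ⊤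
  · simp [hb]
  have hreal (A : Set Z) (hA : MeasurableSet A) : μ.real A ≤ ν.real A + b.toReal :=
    (ENNReal.toReal_mono (by finiteness) (h A hA)).trans
      (ENNReal.toReal_add (by finiteness) hb).le
  have : Nonempty {S : Set Z // MeasurableSet S} := ⟨⟨∅, MeasurableSet.empty⟩⟩
  rw [ENNReal.ofReal_le_iff_le_toReal hb]
  refine ciSup_le fun ⟨A, hA⟩ => abs_sub_le_iff.2 ⟨sub_le_iff_le_add'.2 (hreal A hA), ?_⟩
  have hcompl := hreal Aᶜ hA.compl
  rw [probReal_compl_eq_one_sub hA, probReal_compl_eq_one_sub hA] at hcompl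
  exact sub_le_iff_le_add'.2 (by linarith : ν.real A ≤ μ.real A + b.toReal)

lemma lintegral_mul_lintegral_le_of_forall {ν ν' : Measure Z} [SFinite ν] [SFinite ν']
    {F G v : Z → ℝ≥0∞} (hF : Measurable F) (hG : Measurable G) (hv : Measurable v) {c d : ℝ≥0∞}
    (h : ∀ x x', F x * G x' ≤ G x * F x' + (c * (G x * G x') + d * (v x * v x'))) :
    (∫⁻ x, F x ∂ν) * ∫⁻ x, G x ∂ν' ≤
      (∫⁻ x, G x ∂ν) * ∫⁻ x, F x ∂ν' +
        (c * ((∫⁻ x, G x ∂ν) * ∫⁻ x, G x ∂ν') + d * ((∫⁻ x, v x ∂ν) * ∫⁻ x, v x ∂ν')) := by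
  have hprod {a b : Z → ℝ≥0∞} (ha : Measurable a) (hb : Measurable b) :
      Measurable fun z : Z × Z => a z.1 * b z.2 :=
    (ha.comp measurable_fst).mul (hb.comp measurable_snd)
  have hint := lintegral_mono (μ := ν.prod ν') fun z => h z.1 z.2
  rw [lintegral_add_left (hprod hG hF), lintegral_add_left ((hprod hG hG).const_mul c),
    lintegral_const_mul c (hprod hG hG), lintegral_const_mul d (hprod hv hv)] at hint
  simpa only [lintegral_prod_mul hF.aemeasurable hG.aemeasurable,
    lintegral_prod_mul hG.aemeasurable hF.aemeasurable,
    lintegral_prod_mul hG.aemeasurable hG.aemeasurable,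
    lintegral_prod_mul hv.aemeasurable hv.aemeasurable] using hint

end Measures

section Backward

variable {Z : Type*} [MeasurableSpace Z] {K K' : Kernel Z Z} {W : ℕ → Z → ℝ≥0∞}
  {f : Z → ℝ≥0∞} {S : Set Z} {r : ℝ≥0∞}

/-- The backward (Feynman–Kac) function
`z ↦ 𝔼_z[W k Z₀ * W (k + 1) Z₁ * ⋯ * W (k + m) Z_m * f Z_m]` of the chain `(Z_i)` with transition
kernel `K`. The starting time `k` is an argument so that the recursion leaves `W` alone. -/
noncomputable def backward (K : Kernel Z Z) (W : ℕ → Z → ℝ≥0∞) (f : Z → ℝ≥0∞) :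
    ℕ → ℕ → Z → ℝ≥0∞
  | 0, k => fun z => W k z * f z
  | m + 1, k => fun z => W k z * ∫⁻ z', backward K W f m (k + 1) z' ∂K z

lemma backward_succ (K : Kernel Z Z) (W : ℕ → Z → ℝ≥0∞) (f : Z → ℝ≥0∞) (m k : ℕ) (z : Z) :
    backward K W f (m + 1) k z = W k z * ∫⁻ z', backward K W f m (k + 1) z' ∂K z :=
  rfl

lemma measurable_backward (hW : ∀ i, Measurable (W i)) (hf : Measurable f) (m k : ℕ) :
    Measurable (backward K W f m k) := by
  induction m generalizing k with
  | zero => exact (hW k).mul hf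
  | succ m ih => exact (hW k).mul (ih (k + 1)).lintegral_kernel

lemma backward_mono_kernel (hK : ∀ z, K z ≤ K' z) (m k : ℕ) (z : Z) :
    backward K W f m k z ≤ backward K' W f m k z := by
  induction m generalizing k z with
  | zero => exact le_rfl
  | succ m ih => exact mul_le_mul_right (lintegral_mono' (hK z) (ih (k + 1))) _

lemma Icc_add_succ_eq_insert (k m : ℕ) :
    Finset.Icc k (k + (m + 1)) = insert k (Finset.Icc (k + 1) (k + 1 + m)) := by
  rw [Finset.insert_Icc_add_one_left_eq_Icc (by omega), Nat.add_right_comm, Nat.add_assoc]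

lemma backward_one_le_prod_mul [IsMarkovKernel K] {v : Z → ℝ≥0∞} (hv : Measurable v)
    (hv1 : ∀ z, 1 ≤ v z) {A : ℕ → ℝ≥0∞} (hA : ∀ i z, W i z * ∫⁻ z', v z' ∂K z ≤ A i * v z)
    (m k : ℕ) (z : Z) :
    backward K W (fun _ => 1) m k z ≤ (∏ i ∈ Finset.Icc k (k + m), A i) * v z := by
  induction m generalizing k z with
  | zero =>
    calc W k z * 1 ≤ W k z * ∫⁻ z', v z' ∂K z := by
          gcongr
          simpa using lintegral_mono (μ := K z) hv1
      _ ≤ A k * v z := hA k z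
      _ = (∏ i ∈ Finset.Icc k (k + 0), A i) * v z := by simp
  | succ m ih =>
    calc W k z * ∫⁻ z', backward K W (fun _ => 1) m (k + 1) z' ∂K z
        ≤ W k z * ∫⁻ z', (∏ i ∈ Finset.Icc (k + 1) (k + 1 + m), A i) * v z' ∂K z := by
          gcongr with z'
          exact ih (k + 1) z'
      _ = (∏ i ∈ Finset.Icc (k + 1) (k + 1 + m), A i) * (W k z * ∫⁻ z', v z' ∂K z) := by
          rw [lintegral_const_mul _ hv]
          ring
      _ ≤ (∏ i ∈ Finset.Icc (k + 1) (k + 1 + m), A i) * (A k * v z) :=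
          mul_le_mul_right (hA k z) _
      _ = (∏ i ∈ Finset.Icc k (k + (m + 1)), A i) * v z := by
          rw [Icc_add_succ_eq_insert, Finset.prod_insert (by simp)]
          ring

open Classical in
/-- The kernel `K` with the mass of each transition from `S` to `S` multiplied by `r`. For
measurable `S` only: otherwise `Kernel.withDensity` is `0`. -/
noncomputable def discount (K : Kernel Z Z) [IsSFiniteKernel K] (S : Set Z) (r : ℝ≥0∞) :
    Kernel Z Z :=
  K.withDensity fun z z' => if z ∈ S ∧ z' ∈ S then r else 1

open Classical in
lemma measurable_discount_density (hS : MeasurableSet S) (r : ℝ≥0∞) :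
    Measurable (Function.uncurry fun z z' => if z ∈ S ∧ z' ∈ S then r else 1) :=
  Measurable.ite (hS.prod hS) measurable_const measurable_const

section Discount

variable [IsSFiniteKernel K]

open Classical in
lemma discount_apply_of_mem (hS : MeasurableSet S) {z : Z} (hz : z ∈ S) :
    discount K S r z = (K z).withDensity fun z' => if z' ∈ S then r else 1 := by
  simp only [discount, Kernel.withDensity_apply K (measurable_discount_density hS r), hz, true_and]

lemma discount_apply_of_notMem (hS : MeasurableSet S) {z : Z} (hz : z ∉ S) :
    discount K S r z = K z := by
  simp only [discount, Kernel.withDensity_apply K (measurable_discount_density hS r), hz,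
    false_and, if_false]
  exact withDensity_one

lemma discount_apply_le (hS : MeasurableSet S) (hr : r ≤ 1) (z : Z) : discount K S r z ≤ K z := by
  by_cases hz : z ∈ S
  · rw [discount_apply_of_mem hS hz]
    refine (withDensity_mono (.of_forall fun z' => ?_)).trans withDensity_one.le
    simp only [Pi.one_apply]
    split_ifs
    exacts [hr, le_rfl]
  · rw [discount_apply_of_notMem hS hz]

open Classical in
lemma lintegral_discount_of_mem (hS : MeasurableSet S) {z : Z} (hz : z ∈ S) {h : Z → ℝ≥0∞}
    (hh : Measurable h) :
    ∫⁻ z', h z' ∂discount K S r z = ∫⁻ z', (if z' ∈ S then r else 1) * h z' ∂K z := by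
  rw [discount_apply_of_mem hS hz]
  exact lintegral_withDensity_eq_lintegral_mul (K z)
    (Measurable.ite hS measurable_const measurable_const) hh

end Discount

lemma mul_lintegral_le_add {μ : Measure Z} {h G v : Z → ℝ≥0∞} {w q T b : ℝ≥0∞}
    (hG : Measurable G) (hv : Measurable v) (hle : ∀ z, h z ≤ q * G z + T * v z)
    (hb : w * ∫⁻ z, v z ∂μ ≤ b) :
    w * ∫⁻ z, h z ∂μ ≤ q * (w * ∫⁻ z, G z ∂μ) + T * b := by
  calc w * ∫⁻ z, h z ∂μ ≤ w * ∫⁻ z, q * G z + T * v z ∂μ := by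
        gcongr with z
        exact hle z
    _ = q * (w * ∫⁻ z, G z ∂μ) + T * (w * ∫⁻ z, v z ∂μ) := by
        rw [lintegral_add_left (hG.const_mul q), lintegral_const_mul _ hG,
          lintegral_const_mul _ hv]
        ring
    _ ≤ q * (w * ∫⁻ z, G z ∂μ) + T * b := by gcongr

section Drift

variable [IsMarkovKernel K] {v : Z → ℝ≥0∞} {A B : ℕ → ℝ≥0∞}

lemma backward_discount_le_of_eq_zero_or_eq_zero (hS : MeasurableSet S) (hr : r ≤ 1)
    (hv : Measurable v) (hv1 : ∀ z, 1 ≤ v z)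
    (hA : ∀ i z, W i z * ∫⁻ z', v z' ∂K z ≤ A i * v z) {a t : ℕ} (h0 : t = 0 ∨ a = 0)
    (m k : ℕ) (z : Z) :
    backward (discount K S r) W (fun _ => 1) m k z ≤
      r ^ t * backward K W (fun _ => 1) m k z + supProd A B (Finset.Icc k (k + m)) a * v z := by
  refine (backward_mono_kernel (discount_apply_le hS hr) m k z).trans ?_
  rcases h0 with rfl | rfl
  · simp only [pow_zero, one_mul, le_self_add]
  · rw [supProd_zero]
    exact (backward_one_le_prod_mul hv hv1 hA m k z).trans le_add_self

-- A visit outside `S` spoils at most two transitions, so that of the `m` transitions at least `t`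
-- stay in `S` (discount `r ^ t`) or at least `a` states lie outside `S` (factors `B`). A start
-- outside `S` spoils only one transition, whence the two conditions on `2 * a + t`.
lemma backward_discount_le (hS : MeasurableSet S) (hr : r ≤ 1) (hW : ∀ i, Measurable (W i))
    (hv : Measurable v) (hv1 : ∀ z, 1 ≤ v z)
    (hA : ∀ i z, W i z * ∫⁻ z', v z' ∂K z ≤ A i * v z)
    (hB : ∀ i, ∀ z ∉ S, W i z * ∫⁻ z', v z' ∂K z ≤ B i * v z)
    {m a t : ℕ} (k : ℕ) {z : Z} (hat : 2 * a + t ≤ m + 2) (hatS : z ∈ S → 2 * a + t ≤ m + 1) :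
    backward (discount K S r) W (fun _ => 1) m k z ≤
      r ^ t * backward K W (fun _ => 1) m k z + supProd A B (Finset.Icc k (k + m)) a * v z := by
  classical
  induction m generalizing k a t z with
  | zero =>
    exact backward_discount_le_of_eq_zero_or_eq_zero hS hr hv hv1 hA (by omega) 0 k z
  | succ m ih =>
    by_cases h0 : t = 0 ∨ a = 0
    · exact backward_discount_le_of_eq_zero_or_eq_zero hS hr hv hv1 hA h0 (m + 1) k z
    obtain ⟨ht, ha⟩ := not_or.1 h0
    obtain ⟨t, rfl⟩ := Nat.exists_eq_add_one_of_ne_zero ht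
    obtain ⟨a, rfl⟩ := Nat.exists_eq_add_one_of_ne_zero ha
    have hk : k ∉ Finset.Icc (k + 1) (k + 1 + m) := by simp
    have hG : Measurable (backward K W (fun _ => 1) m (k + 1)) :=
      measurable_backward hW measurable_const m (k + 1)
    have hH : Measurable (backward (discount K S r) W (fun _ => 1) m (k + 1)) :=
      measurable_backward hW measurable_const m (k + 1)
    rw [Icc_add_succ_eq_insert]
    by_cases hz : z ∈ S
    · have hle (z' : Z) : (if z' ∈ S then r else 1) *
          backward (discount K S r) W (fun _ => 1) m (k + 1) z' ≤
            r ^ (t + 1) * backward K W (fun _ => 1) m (k + 1) z' +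
              supProd A B (Finset.Icc (k + 1) (k + 1 + m)) (a + 1) * v z' := by
        have hat' := hatS hz
        split_ifs with hz'
        · refine (mul_le_mul_right (ih (a := a + 1) (t := t) (k + 1) (by omega)
            fun _ => by omega) r).trans ?_
          rw [mul_add, ← mul_assoc, ← pow_succ']
          exact add_le_add_right (mul_le_of_le_one_left' hr) _
        · rw [one_mul]
          exact ih (k + 1) (by omega) fun h => absurd h hz'
      rw [backward_succ, backward_succ, lintegral_discount_of_mem hS hz hH]
      refine (mul_lintegral_le_add hG hv hle (hA k z)).trans (add_le_add_right ?_ _)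
      rw [← mul_assoc, mul_comm _ (A k)]
      exact mul_le_mul_left (mul_supProd_le_supProd_insert hk (a + 1)) _
    · rw [backward_succ, backward_succ, discount_apply_of_notMem hS hz]
      refine (mul_lintegral_le_add hG hv (fun z' => ih (a := a) (t := t + 1) (k + 1) (by omega)
        fun _ => by omega) (hB k z hz)).trans (add_le_add_right ?_ _)
      rw [← mul_assoc, mul_comm _ (B k)]
      exact mul_le_mul_left (mul_supProd_le_supProd_insert_succ hk a) _

end Drift

-- Antisymmetry under `T`: on each transition from `S` to `S` the share `L` of the kernel is
-- `T`-invariant and drops out of the comparison, leaving at most the fraction `r`.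
lemma backward_le_backward_comp_add [IsSFiniteKernel K] (hS : MeasurableSet S) {κ : ℝ≥0∞}
    (hrκ : r + κ = 1) {T : Z → Z} (hT : Measurable T) (hKT : ∀ z, K (T z) = (K z).map T)
    (hK : ∀ z ∈ S, ∃ L : Measure Z, IsFiniteMeasure L ∧ MeasurePreserving T L L ∧ L ≤ K z ∧
      κ • (K z).restrict S ≤ L)
    (hW : ∀ i, Measurable (W i)) (hWT : ∀ i z, W i (T z) = W i z) {h : Z → ℝ≥0∞}
    (hf : Measurable f) (hh : Measurable h) (hle : ∀ z, f z ≤ f (T z) + h z) (m k : ℕ) (z : Z) :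
    backward K W f m k z ≤ backward K W f m k (T z) + backward (discount K S r) W h m k z := by
  induction m generalizing k z with
  | zero =>
    simp only [backward, hWT, ← mul_add]
    gcongr
    exact hle z
  | succ m ih =>
    have hF : Measurable (backward K W f m (k + 1)) := measurable_backward hW hf m (k + 1)
    have hH : Measurable (backward (discount K S r) W h m (k + 1)) :=
      measurable_backward hW hh m (k + 1)
    simp only [backward, hWT, hKT, lintegral_map hF hT, ← mul_add]
    gcongr
    by_cases hz : z ∈ S
    · obtain ⟨L, _, hLT, hLK, hL⟩ := hK z hz
      refine (lintegral_le_lintegral_comp_add_lintegral_sub hLT hLK hF hH (ih (k + 1))).trans ?_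
      rw [discount_apply_of_mem hS hz]
      gcongr
      exact sub_le_withDensity_ite hS hrκ hL
    · rw [discount_apply_of_notMem hS hz, ← lintegral_add_right _ hH]
      exact lintegral_mono (ih (k + 1))

lemma backward_parallelComp {X : Type*} [MeasurableSpace X] {Q : Kernel X X} [IsSFiniteKernel Q]
    {W : ℕ → X → ℝ≥0∞} (hW : ∀ i, Measurable (W i)) {f f' : X → ℝ≥0∞} (hf : Measurable f)
    (hf' : Measurable f') (m k : ℕ) (z : X × X) :
    backward (Q ∥ₖ Q) (fun i z => W i z.1 * W i z.2) (fun z => f z.1 * f' z.2) m k z =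
      backward Q W f m k z.1 * backward Q W f' m k z.2 := by
  induction m generalizing k z with
  | zero => simp only [backward]; ring
  | succ m ih =>
    simp only [backward, ih, Kernel.parallelComp_apply]
    rw [lintegral_prod_mul (measurable_backward hW hf m _).aemeasurable
      (measurable_backward hW hf' m _).aemeasurable]
    ring

end Backward

lemma div_le_div_add_of_mul_le {z z' p p' q N : ℝ≥0∞} (hz : z ≠ 0) (hz_top : z ≠ ⊤)
    (hz' : z' ≠ 0) (hz'_top : z' ≠ ⊤) (h : p * z' ≤ z * p' + (q * (z * z') + N)) :
    p / z ≤ p' / z' + (q + N / (z * z')) := by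
  calc p / z = p * z' / (z * z') := (ENNReal.mul_div_mul_right p z hz' hz'_top).symm
    _ ≤ (z * p' + (q * (z * z') + N)) / (z * z') := ENNReal.div_le_div_right h _
    _ = p' / z' + (q + N / (z * z')) := by
        rw [ENNReal.add_div, ENNReal.add_div, ENNReal.mul_div_mul_left p' z' hz hz_top,
          ENNReal.mul_div_cancel_right (mul_ne_zero hz hz') (by finiteness)]

section LDSet

variable {X : Type*} [MeasurableSpace X] {Q : Kernel X X} {C : Set X} {lam : Measure X}
  {em ep : ℝ} {x x' : X}

namespace IsLDSet

protected lemma measurableSet (hC : IsLDSet Q C lam em ep) : MeasurableSet C := hC.1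

lemma measure_pos (hC : IsLDSet Q C lam em ep) : 0 < lam C := hC.2.1

lemma em_pos (hC : IsLDSet Q C lam em ep) : 0 < em := hC.2.2.1

lemma ep_pos (hC : IsLDSet Q C lam em ep) : 0 < ep := hC.2.2.2.1

lemma smul_restrict_le (hC : IsLDSet Q C lam em ep) (hx : x ∈ C) :
    ENNReal.ofReal em • lam.restrict C ≤ (Q x).restrict C := by
  refine Measure.le_iff.2 fun A hA => ?_
  simpa [Measure.restrict_apply hA] using (hC.2.2.2.2 x hx A hA).1

lemma restrict_le_smul (hC : IsLDSet Q C lam em ep) (hx : x ∈ C) :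
    (Q x).restrict C ≤ ENNReal.ofReal ep • lam.restrict C := by
  refine Measure.le_iff.2 fun A hA => ?_
  simpa [Measure.restrict_apply hA] using (hC.2.2.2.2 x hx A hA).2

lemma ofReal_div_smul_restrict_le (hC : IsLDSet Q C lam em ep) (hx : x ∈ C) :
    ENNReal.ofReal (em / ep) • (Q x).restrict C ≤ ENNReal.ofReal em • lam.restrict C := by
  have hep : 0 < ep := hC.ep_pos
  calc ENNReal.ofReal (em / ep) • (Q x).restrict C
      ≤ ENNReal.ofReal (em / ep) • ENNReal.ofReal ep • lam.restrict C := by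
        gcongr
        exact hC.restrict_le_smul hx
    _ = ENNReal.ofReal em • lam.restrict C := by
        rw [smul_smul, ← ENNReal.ofReal_mul' hep.le, div_mul_cancel₀ em hep.ne']

lemma isFiniteMeasure_smul_restrict [IsFiniteKernel Q] (hC : IsLDSet Q C lam em ep) :
    IsFiniteMeasure (ENNReal.ofReal em • lam.restrict C) := by
  obtain ⟨x, hx⟩ : C.Nonempty := nonempty_of_measure_ne_zero hC.measure_pos.ne'
  exact isFiniteMeasure_of_le _ (hC.smul_restrict_le hx)

lemma div_le_one [IsFiniteKernel Q] (hC : IsLDSet Q C lam em ep) : em / ep ≤ 1 := by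
  obtain ⟨x, hx⟩ : C.Nonempty := nonempty_of_measure_ne_zero hC.measure_pos.ne'
  have hpos : Q x C ≠ 0 := by
    have h := hC.smul_restrict_le hx Set.univ
    have hem := hC.em_pos
    intro h0
    simp [h0, hC.measure_pos.ne', hem.not_ge] at h
  have h := ((hC.ofReal_div_smul_restrict_le hx).trans (hC.smul_restrict_le hx)) Set.univ
  simp only [Measure.smul_apply, Measure.restrict_apply_univ, smul_eq_mul] at h
  rw [← ENNReal.ofReal_le_one]
  exact (ENNReal.mul_le_mul_iff_left hpos (measure_ne_top _ _)).1 (by simpa using h)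

lemma sq_div_mem_Icc [IsFiniteKernel Q] (hC : IsLDSet Q C lam em ep) :
    (em / ep) ^ 2 ∈ Set.Icc (0 : ℝ) 1 :=
  ⟨sq_nonneg _, pow_le_one₀ (div_pos hC.em_pos hC.ep_pos).le hC.div_le_one⟩

lemma exists_swap_invariant_le [IsFiniteKernel Q] (hC : IsLDSet Q C lam em ep) (hx : x ∈ C)
    (hx' : x' ∈ C) :
    ∃ L : Measure (X × X), IsFiniteMeasure L ∧ MeasurePreserving Prod.swap L L ∧
      L ≤ (Q x).prod (Q x') ∧
      ENNReal.ofReal ((em / ep) ^ 2) • ((Q x).prod (Q x')).restrict (C ×ˢ C) ≤ L := by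
  have := hC.isFiniteMeasure_smul_restrict
  set m := ENNReal.ofReal em • lam.restrict C
  have hκ : ENNReal.ofReal ((em / ep) ^ 2) • ((Q x).prod (Q x')).restrict (C ×ˢ C) =
      (ENNReal.ofReal (em / ep) • (Q x).restrict C).prod
        (ENNReal.ofReal (em / ep) • (Q x').restrict C) := by
    rw [← Measure.prod_restrict, Measure.prod_smul_left, Measure.prod_smul_right, smul_smul, sq,
      ENNReal.ofReal_mul (div_pos hC.em_pos hC.ep_pos).le]
  refine ⟨m.prod m, inferInstance, Measure.measurePreserving_swap, ?_, ?_⟩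
  · exact Measure.prod_mono ((hC.smul_restrict_le hx).trans Measure.restrict_le_self)
      ((hC.smul_restrict_le hx').trans Measure.restrict_le_self)
  · rw [hκ]
    exact Measure.prod_mono (hC.ofReal_div_smul_restrict_le hx)
      (hC.ofReal_div_smul_restrict_le hx')

end IsLDSet

lemma mul_lintegral_parallelComp_le [IsSFiniteKernel Q] {w v : X → ℝ≥0∞} (hv : Measurable v)
    {c c' : ℝ≥0∞} {z : X × X} (h : w z.1 * ∫⁻ x, v x ∂Q z.1 ≤ c * v z.1)
    (h' : w z.2 * ∫⁻ x, v x ∂Q z.2 ≤ c' * v z.2) :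
    w z.1 * w z.2 * ∫⁻ z', v z'.1 * v z'.2 ∂(Q ∥ₖ Q) z ≤ c * c' * (v z.1 * v z.2) := by
  rw [Kernel.parallelComp_apply, lintegral_prod_mul hv.aemeasurable hv.aemeasurable,
    mul_mul_mul_comm, mul_mul_mul_comm c]
  exact mul_le_mul' h h'

lemma backward_parallelComp_le_swap_add [IsFiniteKernel Q] (hC : IsLDSet Q C lam em ep)
    {W : ℕ → X → ℝ≥0∞} (hW : ∀ i, Measurable (W i)) {f : X → ℝ≥0∞} (hf : Measurable f)
    (hf1 : ∀ x, f x ≤ 1) (m k : ℕ) (x x' : X) :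
    backward Q W f m k x * backward Q W (fun _ => 1) m k x' ≤
      backward Q W f m k x' * backward Q W (fun _ => 1) m k x +
        backward (discount (Q ∥ₖ Q) (C ×ˢ C) (ENNReal.ofReal (1 - (em / ep) ^ 2)))
          (fun i z => W i z.1 * W i z.2) (fun _ => 1) m k (x, x') := by
  have hq := hC.sq_div_mem_Icc
  have hrκ : ENNReal.ofReal (1 - (em / ep) ^ 2) + ENNReal.ofReal ((em / ep) ^ 2) = 1 := by
    rw [← ENNReal.ofReal_add (sub_nonneg.2 hq.2) hq.1, sub_add_cancel, ENNReal.ofReal_one]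
  have hpair := backward_parallelComp (Q := Q) hW hf measurable_const (f' := fun _ => 1) m k
  rw [← hpair (x, x'), ← hpair (x', x)]
  have hswap (z : X × X) : (Q ∥ₖ Q) z.swap = ((Q ∥ₖ Q) z).map Prod.swap := by
    rw [Kernel.parallelComp_apply, Kernel.parallelComp_apply, Measure.prod_swap]
    rfl
  refine backward_le_backward_comp_add (f := fun z : X × X => f z.1 * 1)
    (hC.measurableSet.prod hC.measurableSet) hrκ measurable_swap hswap (fun z hz => ?_)
    (fun i => ((hW i).comp measurable_fst).mul ((hW i).comp measurable_snd))
    (fun i z => mul_comm _ _) ((hf.comp measurable_fst).mul measurable_const) measurable_const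
    (fun z => ?_) m k (x, x')
  · rw [Kernel.parallelComp_apply]
    exact hC.exists_swap_invariant_le hz.1 hz.2
  · rw [mul_one]
    exact (hf1 z.1).trans le_add_self

lemma backward_discount_parallelComp_le [IsMarkovKernel Q] (hC : MeasurableSet C) {r : ℝ≥0∞}
    (hr : r ≤ 1) {W : ℕ → X → ℝ≥0∞} (hW : ∀ i, Measurable (W i)) {v : X → ℝ≥0∞}
    (hv : Measurable v) (hv1 : ∀ x, 1 ≤ v x) {A B : ℕ → ℝ≥0∞}
    (hA : ∀ i x, W i x * ∫⁻ x', v x' ∂Q x ≤ A i * v x)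
    (hB : ∀ i, ∀ x ∉ C, W i x * ∫⁻ x', v x' ∂Q x ≤ B i * v x)
    {m a t : ℕ} (hat : 2 * a + t ≤ m + 1) (k : ℕ) (x x' : X) :
    backward (discount (Q ∥ₖ Q) (C ×ˢ C) r) (fun i z => W i z.1 * W i z.2) (fun _ => 1) m k
        (x, x') ≤
      r ^ t * (backward Q W (fun _ => 1) m k x * backward Q W (fun _ => 1) m k x') +
        (∏ i ∈ Finset.Icc k (k + m), A i) * supProd A B (Finset.Icc k (k + m)) a *
          (v x * v x') := by
  have hpair := backward_parallelComp (Q := Q) hW (f := fun _ => 1) measurable_const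
    (f' := fun _ => 1) measurable_const m k (x, x')
  simp only [mul_one] at hpair
  rw [← hpair, ← supProd_mul_left A A B]
  refine backward_discount_le (v := fun z : X × X => v z.1 * v z.2) (hC.prod hC) hr
    (fun i => ((hW i).comp measurable_fst).mul ((hW i).comp measurable_snd))
    ((hv.comp measurable_fst).mul (hv.comp measurable_snd))
    (fun z => one_le_mul (hv1 z.1) (hv1 z.2))
    (fun i z => mul_lintegral_parallelComp_le hv (hA i z.1) (hA i z.2)) (fun i z hz => ?_) k
    (by omega) fun _ => hat
  by_cases hz1 : z.1 ∈ C
  · have hz2 : z.2 ∉ C := fun h => hz ⟨hz1, h⟩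
    exact mul_lintegral_parallelComp_le hv (hA i z.1) (hB i z.2 hz2)
  · rw [mul_comm (A i)]
    exact mul_lintegral_parallelComp_le hv (hB i z.1 hz1) (hA i z.2)

end LDSet

section Filtering

variable {X Y : Type*} [MeasurableSpace X] {Q : Kernel X X} {g : X → Y → ℝ}
  (hg : ∀ y, Measurable fun x => g x y) {ν : Measure X} {y : ℕ → Y} {f : X → ℝ≥0∞}
include hg

lemma lintegral_filtSeq_zero (hf : Measurable f) :
    ∫⁻ x, f x ∂filtSeq Q g ν y 0 = ∫⁻ x, ENNReal.ofReal (g x (y 0)) * f x ∂ν :=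
  lintegral_withDensity_eq_lintegral_mul ν (hg _).ennreal_ofReal hf

lemma lintegral_filtSeq_succ (hf : Measurable f) (k : ℕ) :
    ∫⁻ x, f x ∂filtSeq Q g ν y (k + 1) =
      ∫⁻ x, ∫⁻ x', ENNReal.ofReal (g x' (y (k + 1))) * f x' ∂Q x ∂filtSeq Q g ν y k := by
  have hgf : Measurable fun x' => ENNReal.ofReal (g x' (y (k + 1))) * f x' :=
    (hg _).ennreal_ofReal.mul hf
  rw [← Measure.lintegral_bind Q.measurable.aemeasurable hgf.aemeasurable]
  exact lintegral_withDensity_eq_lintegral_mul _ (hg _).ennreal_ofReal hf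

lemma lintegral_lintegral_backward_filtSeq (hf : Measurable f) (m k : ℕ) :
    ∫⁻ x, ∫⁻ x', backward Q (fun i x => ENNReal.ofReal (g x (y i))) f m (k + 1) x' ∂Q x
        ∂filtSeq Q g ν y k =
      ∫⁻ x, f x ∂filtSeq Q g ν y (k + m + 1) := by
  induction m generalizing k with
  | zero => exact (lintegral_filtSeq_succ hg hf k).symm
  | succ m ih =>
    have hback := (measurable_backward (K := Q) (fun i => (hg (y i)).ennreal_ofReal) hf m
      (k + 1 + 1)).lintegral_kernel (κ := Q)
    simp only [backward_succ]
    rw [← lintegral_filtSeq_succ hg hback k, ih, Nat.add_right_comm k 1, Nat.add_assoc k m 1]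

lemma lintegral_backward_eq_lintegral_filtSeq (hf : Measurable f) (n : ℕ) :
    ∫⁻ x, backward Q (fun i x => ENNReal.ofReal (g x (y i))) f n 0 x ∂ν =
      ∫⁻ x, f x ∂filtSeq Q g ν y n := by
  cases n with
  | zero => exact (lintegral_filtSeq_zero hg hf).symm
  | succ m =>
    have hback := (measurable_backward (K := Q) (fun i => (hg (y i)).ennreal_ofReal) hf m
      1).lintegral_kernel (κ := Q)
    simp only [backward_succ]
    rw [← lintegral_filtSeq_zero hg hback, lintegral_lintegral_backward_filtSeq hg hf, zero_add]

section LowerBound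

variable {D : Set X} {lam : Measure X} {e : ℝ≥0∞} (hD : MeasurableSet D)
include hD

lemma measurable_setLIntegral_kernel (i : ℕ) :
    Measurable fun x => ∫⁻ x' in D, ENNReal.ofReal (g x' (y i)) ∂Q x := by
  simp only [← lintegral_indicator hD]
  exact ((hg _).ennreal_ofReal.indicator hD).lintegral_kernel

lemma filtSeq_succ_apply (k : ℕ) :
    filtSeq Q g ν y (k + 1) D =
      ∫⁻ x, ∫⁻ x' in D, ENNReal.ofReal (g x' (y (k + 1))) ∂Q x ∂filtSeq Q g ν y k := by
  rw [← lintegral_indicator_one hD, lintegral_filtSeq_succ hg (measurable_one.indicator hD)]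
  simp only [← lintegral_indicator hD]
  congr! 4 with x x'
  by_cases hx' : x' ∈ D <;> simp [hx']

lemma filtSeq_one_apply : filtSeq Q g ν y 1 D = Phi Q g ν D (y 0) (y 1) := by
  rw [filtSeq_succ_apply hg hD, lintegral_filtSeq_zero hg (measurable_setLIntegral_kernel hg hD 1),
    Phi]

variable (hle : ∀ x ∈ D, e • lam.restrict D ≤ (Q x).restrict D)
include hle

lemma mul_Psi_mul_filtSeq_le (k : ℕ) :
    e * Psi g lam D (y (k + 1)) * filtSeq Q g ν y k D ≤ filtSeq Q g ν y (k + 1) D := by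
  calc e * Psi g lam D (y (k + 1)) * filtSeq Q g ν y k D
      = ∫⁻ _ in D, e * Psi g lam D (y (k + 1)) ∂filtSeq Q g ν y k := by
        rw [setLIntegral_const]
    _ ≤ ∫⁻ x in D, ∫⁻ x' in D, ENNReal.ofReal (g x' (y (k + 1))) ∂Q x ∂filtSeq Q g ν y k := by
        refine setLIntegral_mono (measurable_setLIntegral_kernel hg hD _) fun x hx => ?_
        rw [Psi, ← smul_eq_mul, ← lintegral_smul_measure]
        exact lintegral_mono' (hle x hx) le_rfl
    _ ≤ filtSeq Q g ν y (k + 1) D :=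
        (setLIntegral_le_lintegral _ _).trans (filtSeq_succ_apply hg hD k).ge

lemma pow_mul_Phi_mul_prod_Psi_le_filtSeq (n : ℕ) :
    e ^ n * Phi Q g ν D (y 0) (y 1) * ∏ i ∈ Finset.Icc 2 (n + 1), Psi g lam D (y i) ≤
      filtSeq Q g ν y (n + 1) D := by
  induction n with
  | zero => simp [filtSeq_one_apply hg hD]
  | succ n ih =>
    refine le_trans ?_ (mul_Psi_mul_filtSeq_le hg hD hle (n + 1))
    rw [Finset.prod_Icc_succ_top (by omega)]
    calc _ = e * Psi g lam D (y (n + 1 + 1)) * (e ^ n * Phi Q g ν D (y 0) (y 1) *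
            ∏ i ∈ Finset.Icc 2 (n + 1), Psi g lam D (y i)) := by ring
      _ ≤ e * Psi g lam D (y (n + 1 + 1)) * filtSeq Q g ν y (n + 1) D := mul_le_mul_right ih _

lemma Phi_mul_prod_Psi_sq_le_filtSeq_mul_filtSeq {n : ℕ} (hn : 1 ≤ n) (ν ν' : Measure X) :
    e ^ (2 * (n - 1)) * Phi Q g ν D (y 0) (y 1) * Phi Q g ν' D (y 0) (y 1) *
        ∏ i ∈ Finset.Icc 2 n, Psi g lam D (y i) ^ 2 ≤
      filtSeq Q g ν y n Set.univ * filtSeq Q g ν' y n Set.univ := by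
  obtain ⟨m, rfl⟩ := Nat.exists_eq_add_of_le' hn
  have hmass (μ : Measure X) : e ^ m * Phi Q g μ D (y 0) (y 1) *
      ∏ i ∈ Finset.Icc 2 (m + 1), Psi g lam D (y i) ≤ filtSeq Q g μ y (m + 1) Set.univ :=
    (pow_mul_Phi_mul_prod_Psi_le_filtSeq hg hD hle m).trans (measure_mono D.subset_univ)
  refine le_trans (le_of_eq ?_) (mul_le_mul' (hmass ν) (hmass ν'))
  rw [Nat.add_sub_cancel, Finset.prod_pow, pow_mul']
  ring

end LowerBound

variable {C : Set X} {lam : Measure X} {em ep : ℝ}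

lemma filtSeq_apply_mul_le [IsMarkovKernel Q] (hC : IsLDSet Q C lam em ep) {v : X → ℝ≥0∞}
    (hv : Measurable v) (hv1 : ∀ x, 1 ≤ v x) {U U' : ℕ → ℝ≥0∞}
    (hU : ∀ i x, ENNReal.ofReal (g x (y i)) * ∫⁻ x', v x' ∂Q x ≤ U i * v x)
    (hU' : ∀ i, ∀ x ∉ C, ENNReal.ofReal (g x (y i)) * ∫⁻ x', v x' ∂Q x ≤ U' i * v x)
    {n a t : ℕ} (hat : 2 * a + t ≤ n + 1) (ν ν' : Measure X) [SFinite ν] [SFinite ν']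
    {E : Set X} (hE : MeasurableSet E) :
    filtSeq Q g ν y n E * filtSeq Q g ν' y n Set.univ ≤
      filtSeq Q g ν y n Set.univ * filtSeq Q g ν' y n E +
        (ENNReal.ofReal (1 - (em / ep) ^ 2) ^ t *
            (filtSeq Q g ν y n Set.univ * filtSeq Q g ν' y n Set.univ) +
          (∏ i ∈ Finset.range (n + 1), U i) * supProd U U' (Finset.range (n + 1)) a *
            ((∫⁻ x, v x ∂ν) * ∫⁻ x, v x ∂ν')) := by
  set r := ENNReal.ofReal (1 - (em / ep) ^ 2)
  have hr : r ≤ 1 := by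
    rw [ENNReal.ofReal_le_one]
    exact sub_le_self _ (sq_nonneg _)
  have hW (i : ℕ) : Measurable fun x => ENNReal.ofReal (g x (y i)) := (hg _).ennreal_ofReal
  have hf : Measurable (E.indicator (1 : X → ℝ≥0∞)) := measurable_one.indicator hE
  set F := backward Q (fun i x => ENNReal.ofReal (g x (y i))) (E.indicator 1) n 0
  set G := backward Q (fun i x => ENNReal.ofReal (g x (y i))) (fun _ => 1) n 0
  have hF : Measurable F := measurable_backward hW hf n 0
  have hG : Measurable G := measurable_backward hW measurable_const n 0
  have intF (μ : Measure X) : ∫⁻ x, F x ∂μ = filtSeq Q g μ y n E := by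
    rw [lintegral_backward_eq_lintegral_filtSeq hg hf, lintegral_indicator_one hE]
  have intG (μ : Measure X) : ∫⁻ x, G x ∂μ = filtSeq Q g μ y n Set.univ := by
    rw [lintegral_backward_eq_lintegral_filtSeq hg measurable_const, lintegral_one]
  rw [← intF ν, ← intF ν', ← intG ν, ← intG ν']
  refine lintegral_mul_lintegral_le_of_forall hF hG hv fun x x' => ?_
  refine (backward_parallelComp_le_swap_add hC hW hf
    (Set.indicator_le_self' fun _ _ => zero_le_one) n 0 x x').trans ?_
  have hdrift := backward_discount_parallelComp_le hC.measurableSet hr hW hv hv1 hU hU' hat 0 x x'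
  rw [zero_add, ← Nat.range_succ_eq_Icc_zero] at hdrift
  rw [mul_comm (G x) (F x')]
  exact add_le_add_right hdrift _

lemma filt_apply_le [IsMarkovKernel Q] (hC : IsLDSet Q C lam em ep) {v : X → ℝ≥0∞}
    (hv : Measurable v) (hv1 : ∀ x, 1 ≤ v x) {U U' : ℕ → ℝ≥0∞}
    (hU : ∀ i x, ENNReal.ofReal (g x (y i)) * ∫⁻ x', v x' ∂Q x ≤ U i * v x)
    (hU' : ∀ i, ∀ x ∉ C, ENNReal.ofReal (g x (y i)) * ∫⁻ x', v x' ∂Q x ≤ U' i * v x)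
    {n a t : ℕ} (hat : 2 * a + t ≤ n + 1) (ν ν' : Measure X) [SFinite ν] [SFinite ν']
    (hν : 0 < filtSeq Q g ν y n Set.univ ∧ filtSeq Q g ν y n Set.univ ≠ ⊤)
    (hν' : 0 < filtSeq Q g ν' y n Set.univ ∧ filtSeq Q g ν' y n Set.univ ≠ ⊤)
    {E : Set X} (hE : MeasurableSet E) :
    filt Q g ν y n E ≤ filt Q g ν' y n E + (ENNReal.ofReal (1 - (em / ep) ^ 2) ^ t +
      (∏ i ∈ Finset.range (n + 1), U i) * supProd U U' (Finset.range (n + 1)) a *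
          ((∫⁻ x, v x ∂ν) * ∫⁻ x, v x ∂ν') /
        (filtSeq Q g ν y n Set.univ * filtSeq Q g ν' y n Set.univ)) := by
  simp only [filt, Measure.smul_apply, smul_eq_mul, ← ENNReal.div_eq_inv_mul]
  exact div_le_div_add_of_mul_le hν.1.ne' hν.2 hν'.1.ne' hν'.2
    (filtSeq_apply_mul_le hg hC hv hv1 hU hU' hat ν ν' hE)

end Filtering

lemma two_mul_floor_add_ceil_le {β : ℝ} (hβ : β ∈ Set.Icc (0 : ℝ) 1) (n : ℕ) :
    2 * ⌊(n : ℝ) * (1 - β) / 2⌋₊ + ⌈β * n⌉₊ ≤ n + 1 := by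
  have hn : (0 : ℝ) ≤ n := n.cast_nonneg
  have hfloor := Nat.floor_le (div_nonneg (mul_nonneg hn (sub_nonneg.2 hβ.2)) zero_le_two)
  have hceil := Nat.ceil_lt_add_one (mul_nonneg hβ.1 hn)
  rify
  linarith

lemma ofReal_pow_ceil_le {ρ b : ℝ} (hρ : ρ ∈ Set.Icc (0 : ℝ) 1) (hb : 0 ≤ b) :
    ENNReal.ofReal ρ ^ ⌈b⌉₊ ≤ ENNReal.ofReal (ρ ^ b) := by
  rw [← ENNReal.ofReal_pow hρ.1, ← Real.rpow_natCast]
  exact ENNReal.ofReal_le_ofReal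
    (Real.rpow_le_rpow_of_exponent_ge' hρ.1 hρ.2 hb (Nat.le_ceil b))

section Main

variable {X Y : Type*} [MeasurableSpace X] {Q : Kernel X X} {g : X → Y → ℝ} {V : X → ℝ}

lemma mul_lintegral_le_Ups_mul (hV1 : ∀ x, 1 ≤ V x) {A : Set X} {x : X} (hx : x ∈ A) (y : Y) :
    ENNReal.ofReal (g x y) * ∫⁻ x', ENNReal.ofReal (V x') ∂Q x ≤
      Ups Q g V A y * ENNReal.ofReal (V x) := by
  have hVx : ENNReal.ofReal (V x) ≠ 0 := (ENNReal.ofReal_pos.2 (by linarith [hV1 x])).ne'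
  rw [← ENNReal.div_le_iff hVx ENNReal.ofReal_ne_top]
  exact le_iSup₂ (f := fun x (_ : x ∈ A) =>
    ENNReal.ofReal (g x y) * kernelV Q V x / ENNReal.ofReal (V x)) x hx

lemma isProbabilityMeasure_filt {ν : Measure X} {y : ℕ → Y} {n : ℕ}
    (h : 0 < filtSeq Q g ν y n Set.univ ∧ filtSeq Q g ν y n Set.univ ≠ ⊤) :
    IsProbabilityMeasure (filt Q g ν y n) := by
  have : IsFiniteMeasure (filtSeq Q g ν y n) := ⟨h.2.lt_top⟩
  have : NeZero (filtSeq Q g ν y n) := ⟨fun h0 => by simp [h0] at h⟩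
  exact isProbabilityMeasureSMul

theorem forgetting_hmm_stmt4_general [IsMarkovKernel Q]
    (hg : ∀ y, Measurable fun x => g x y) (_hg0 : ∀ x y, 0 ≤ g x y)
    {C : Set X} {lamC : Measure X} {emC epC : ℝ} (hC : IsLDSet Q C lamC emC epC)
    {D : Set X} {lamD : Measure X} {e : ℝ≥0∞} (hD : MeasurableSet D)
    (hle : ∀ x ∈ D, e • lamD.restrict D ≤ (Q x).restrict D)
    {ν ν' : Measure X} [SFinite ν] [SFinite ν'] (hV : Measurable V) (hV1 : ∀ x, 1 ≤ V x)
    {n a t : ℕ} (hn : 1 ≤ n) (hat : 2 * a + t ≤ n + 1) {y : ℕ → Y}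
    (hν : 0 < filtSeq Q g ν y n Set.univ ∧ filtSeq Q g ν y n Set.univ ≠ ⊤)
    (hν' : 0 < filtSeq Q g ν' y n Set.univ ∧ filtSeq Q g ν' y n Set.univ ≠ ⊤) :
    ENNReal.ofReal (tvDist (filt Q g ν y n) (filt Q g ν' y n)) ≤
      ENNReal.ofReal (1 - (emC / epC) ^ 2) ^ t +
        (∏ i ∈ Finset.range (n + 1), Ups Q g V Set.univ (y i)) *
            supProd (fun i => Ups Q g V Set.univ (y i)) (fun i => Ups Q g V Cᶜ (y i))
              (Finset.range (n + 1)) a *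
            ((∫⁻ x, ENNReal.ofReal (V x) ∂ν) * ∫⁻ x, ENNReal.ofReal (V x) ∂ν') /
          (e ^ (2 * (n - 1)) * Phi Q g ν D (y 0) (y 1) * Phi Q g ν' D (y 0) (y 1) *
            ∏ i ∈ Finset.Icc 2 n, Psi g lamD D (y i) ^ 2) := by
  have := isProbabilityMeasure_filt hν
  have := isProbabilityMeasure_filt hν'
  refine ofReal_tvDist_le fun E hE => ?_
  refine (filt_apply_le hg hC hV.ennreal_ofReal (fun x => ENNReal.one_le_ofReal.2 (hV1 x))
    (fun i x => mul_lintegral_le_Ups_mul hV1 (Set.mem_univ x) (y i))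
    (fun i x hx => mul_lintegral_le_Ups_mul hV1 (A := Cᶜ) hx (y i)) hat ν ν' hν hν' hE).trans ?_
  have hden := Phi_mul_prod_Psi_sq_le_filtSeq_mul_filtSeq (y := y) hg hD hle hn ν ν'
  exact add_le_add_right (add_le_add_right (ENNReal.div_le_div_left hden _) _) _

end Main


/-- Lemma 3 of the paper: for `β ∈ (0,1)`, LD-sets `C`, `D`, initial
distributions `ν, ν'`, a function `V : X → [1,∞)`, and observations `y_{0:n}` for which both
filtering distributions are well defined,
`‖φ_{ν,n} − φ_{ν',n}‖_TV ≤ ρ_C^{βn} + [∏_{i≤n} Υ_X(y_i) · max_{|I|=aₙ} ∏_{i∈I} Υ_{C^c}(y_i)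
∏_{i∉I} Υ_X(y_i)] ν(V) ν'(V) / [(ε⁻_D)^{2(n−1)} Φ_{ν,D}(y₀,y₁) Φ_{ν',D}(y₀,y₁)
∏_{i=2}^n Ψ_D(y_i)²]` with `aₙ = ⌊n(1−β)/2⌋`. -/
theorem forgetting_hmm_stmt4 {X Y : Type*} [MeasurableSpace X] [MeasurableSpace Y]
    (Q : Kernel X X) [IsMarkovKernel Q]
    (g : X → Y → ℝ) (hgmeas : Measurable (Function.uncurry g)) (hgnn : ∀ x y, 0 ≤ g x y)
    (β : ℝ) (hβ : β ∈ Set.Ioo (0 : ℝ) 1)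
    (C : Set X) (lamC : Measure X) (emC epC : ℝ) (hC : IsLDSet Q C lamC emC epC)
    (D : Set X) (lamD : Measure X) (emD epD : ℝ) (hD : IsLDSet Q D lamD emD epD)
    (ν ν' : Measure X) [IsProbabilityMeasure ν] [IsProbabilityMeasure ν']
    (V : X → ℝ) (hVmeas : Measurable V) (hV1 : ∀ x, 1 ≤ V x)
    (n : ℕ) (hn : 1 ≤ n) (y : ℕ → Y)
    -- both filtering distributions are well defined
    (hwdν : 0 < filtSeq Q g ν y n Set.univ ∧ filtSeq Q g ν y n Set.univ ≠ ⊤)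
    (hwdν' : 0 < filtSeq Q g ν' y n Set.univ ∧ filtSeq Q g ν' y n Set.univ ≠ ⊤) :
    ENNReal.ofReal (tvDist (filt Q g ν y n) (filt Q g ν' y n))
      ≤ ENNReal.ofReal ((1 - (emC / epC) ^ 2) ^ (β * n))
        + ((∏ i ∈ Finset.range (n + 1), Ups Q g V Set.univ (y i)) *
            ((Finset.powersetCard (Nat.floor ((n : ℝ) * (1 - β) / 2))
                (Finset.range (n + 1))).sup
              (fun I => (∏ i ∈ I, Ups Q g V Cᶜ (y i)) *
                ∏ i ∈ Finset.range (n + 1) \ I, Ups Q g V Set.univ (y i))) *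
            ((∫⁻ x, ENNReal.ofReal (V x) ∂ν) * ∫⁻ x, ENNReal.ofReal (V x) ∂ν'))
          / (ENNReal.ofReal emD ^ (2 * (n - 1)) *
              Phi Q g ν D (y 0) (y 1) * Phi Q g ν' D (y 0) (y 1) *
              ∏ i ∈ Finset.Icc 2 n, (Psi g lamD D (y i)) ^ 2) := by
  have hg (y : Y) : Measurable fun x => g x y := hgmeas.comp measurable_prodMk_right
  have hq := hC.sq_div_mem_Icc
  have hρ : 1 - (emC / epC) ^ 2 ∈ Set.Icc (0 : ℝ) 1 := ⟨sub_nonneg.2 hq.2, sub_le_self _ hq.1⟩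
  refine (forgetting_hmm_stmt4_general hg hgnn hC hD.measurableSet
    (fun x hx => hD.smul_restrict_le hx) hVmeas hV1 hn
    (two_mul_floor_add_ceil_le (Set.Ioo_subset_Icc_self hβ) n) hwdν hwdν').trans ?_
  exact add_le_add_left (ofReal_pow_ceil_le hρ (mul_nonneg hβ.1.le n.cast_nonneg)) _
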